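/- Let X ∈ ℝ^{m×n}, let 0 ≤ ε₁ < 1 and 0 ≤ ε₂ < 1, let Ω₁ ∈ ℝ^{s₁×m} be an ε₁-subspace embedding for the column space of X, and let Ω₂ ∈ ℝ^{s₂×s₁} be an ε₂-subspace embedding for the column space of Ω₁X. Set ε_s = ε₁ + ε₂ − ε₁ε₂ and ε_b = ε₁ + ε₂ + ε₁ε₂. Then √(1−ε_s)·‖X‖_g ≤ ‖Ω₂Ω₁X‖_g ≤ √(1+ε_b)·‖X‖_g, where ‖A‖_g = √n · [A]_g and [A]_g is the maximum Euclidean norm among the columns of A. -/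

import Mathlib

/-!
A subspace embedding, tested on a single vector `x = y`, multiplies squared norms by a factor in
`[1 - ε, 1 + ε]`. Such factors multiply when two sketches are composed, and
`1 - ε_s = (1 - ε₂) (1 - ε₁)`, `1 + ε_b = (1 + ε₂) (1 + ε₁)`. Applied to each column of `X`, the
resulting two-sided bound passes to the maximum over the columns.
-/

open scoped BigOperators

/-- Euclidean 2-norm of a vector in `Fin m → ℝ`. -/
noncomputable def evNorm {m : ℕ} (x : Fin m → ℝ) : ℝ :=
  Real.sqrt (∑ i, x i ^ 2)

/-- Euclidean inner product of vectors in `Fin m → ℝ`. -/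
noncomputable def evInner {m : ℕ} (x y : Fin m → ℝ) : ℝ :=
  ∑ i, x i * y i

/-- `[X]_g`: the maximum Euclidean 2-norm among the columns of `X`. -/
noncomputable def gMax {m n : ℕ} (X : Matrix (Fin m) (Fin n) ℝ) : ℝ :=
  ⨆ j : Fin n, evNorm (fun i => X i j)

/-- `‖X‖_g = √n · [X]_g` where `n` is the number of columns of `X`. -/
noncomputable def gNorm {m n : ℕ} (X : Matrix (Fin m) (Fin n) ℝ) : ℝ :=
  Real.sqrt n * gMax X

/-- Spectral norm (largest singular value): supremum of `‖Xv‖₂` over unit vectors `v`. -/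
noncomputable def evSpectralNorm {m n : ℕ} (X : Matrix (Fin m) (Fin n) ℝ) : ℝ :=
  ⨆ v : {v : Fin n → ℝ // evNorm v = 1}, evNorm (X.mulVec v.1)

/-- Smallest singular value: infimum of `‖Xv‖₂` over unit vectors `v`. -/
noncomputable def sigmaMin {m n : ℕ} (X : Matrix (Fin m) (Fin n) ℝ) : ℝ :=
  ⨅ v : {v : Fin n → ℝ // evNorm v = 1}, evNorm (X.mulVec v.1)

/-- Frobenius norm of a real matrix. -/
noncomputable def frobeniusNorm {m n : ℕ} (X : Matrix (Fin m) (Fin n) ℝ) : ℝ :=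
  Real.sqrt (∑ i, ∑ j, X i j ^ 2)

/-- `Ω` is an `ε`-subspace embedding for the subspace `K ⊆ ℝ^m`. -/
def IsSubspaceEmbedding {s m : ℕ} (ε : ℝ) (Ω : Matrix (Fin s) (Fin m) ℝ)
    (K : Submodule ℝ (Fin m → ℝ)) : Prop :=
  ∀ x ∈ K, ∀ y ∈ K,
    |evInner x y - evInner (Ω.mulVec x) (Ω.mulVec y)| ≤ ε * evNorm x * evNorm y

/-- Column space of a matrix: the span of its columns. -/
noncomputable def colSpace {m n : ℕ} (X : Matrix (Fin m) (Fin n) ℝ) :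
    Submodule ℝ (Fin m → ℝ) :=
  Submodule.span ℝ (Set.range fun j : Fin n => fun i => X i j)

open scoped Matrix

/-- The two-sided squared-norm bound `a ‖x‖² ≤ ‖Ωx‖² ≤ b ‖x‖²` for every `x` in `S`; the diagonal
part of an `ε`-embedding is the case `a = 1 - ε`, `b = 1 + ε`. The set `S` need not be a subspace,
so that it can be the set of columns of a matrix. -/
def HasSqNormBoundsOn {s m : ℕ} (a b : ℝ) (Ω : Matrix (Fin s) (Fin m) ℝ)
    (S : Set (Fin m → ℝ)) : Prop :=
  ∀ x ∈ S, a * evNorm x ^ 2 ≤ evNorm (Ω *ᵥ x) ^ 2 ∧ evNorm (Ω *ᵥ x) ^ 2 ≤ b * evNorm x ^ 2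

lemma evNorm_nonneg {m : ℕ} (x : Fin m → ℝ) : 0 ≤ evNorm x :=
  Real.sqrt_nonneg _

lemma evInner_self {m : ℕ} (x : Fin m → ℝ) : evInner x x = evNorm x ^ 2 := by
  rw [evNorm, Real.sq_sqrt (Finset.sum_nonneg fun i _ => sq_nonneg (x i))]
  simp only [evInner, sq]

lemma sqrt_mul_evNorm {m : ℕ} (c : ℝ) (x : Fin m → ℝ) :
    √c * evNorm x = √(c * evNorm x ^ 2) := by
  rw [Real.sqrt_mul' _ (sq_nonneg _), Real.sqrt_sq (evNorm_nonneg x)]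

lemma mul_gNorm_le_mul_gNorm {m p n : ℕ} {X : Matrix (Fin m) (Fin n) ℝ}
    {Y : Matrix (Fin p) (Fin n) ℝ} {a b : ℝ} (ha : 0 ≤ a) (hb : 0 ≤ b)
    (h : ∀ j, a * evNorm (X.col j) ≤ b * evNorm (Y.col j)) :
    a * gNorm X ≤ b * gNorm Y := by
  have hmax : a * gMax X ≤ b * gMax Y := by
    rw [gMax, gMax, Real.mul_iSup_of_nonneg ha, Real.mul_iSup_of_nonneg hb]
    exact ciSup_mono (Set.finite_range _).bddAbove h
  rw [gNorm, gNorm, mul_left_comm a, mul_left_comm b]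
  gcongr

lemma range_col_subset_colSpace {m n : ℕ} (X : Matrix (Fin m) (Fin n) ℝ) :
    Set.range X.col ⊆ colSpace X :=
  Submodule.subset_span

lemma mapsTo_mulVec_range_col {s m n : ℕ} (Ω : Matrix (Fin s) (Fin m) ℝ)
    (X : Matrix (Fin m) (Fin n) ℝ) :
    Set.MapsTo Ω.mulVec (Set.range X.col) (Set.range (Ω * X).col) := by
  rintro _ ⟨j, rfl⟩
  exact ⟨j, rfl⟩

lemma IsSubspaceEmbedding.hasSqNormBoundsOn {s m : ℕ} {ε : ℝ} {Ω : Matrix (Fin s) (Fin m) ℝ}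
    {K : Submodule ℝ (Fin m → ℝ)} (hΩ : IsSubspaceEmbedding ε Ω K) :
    HasSqNormBoundsOn (1 - ε) (1 + ε) Ω K := by
  intro x hx
  have hdiag := hΩ x hx x hx
  rw [evInner_self, evInner_self, mul_assoc, ← sq] at hdiag
  obtain ⟨hlower, hupper⟩ := abs_le.mp hdiag
  constructor <;> linarith

namespace HasSqNormBoundsOn

variable {s m : ℕ} {a b : ℝ} {Ω : Matrix (Fin s) (Fin m) ℝ}

lemma mono {S T : Set (Fin m → ℝ)} (h : HasSqNormBoundsOn a b Ω T) (hST : S ⊆ T) :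
    HasSqNormBoundsOn a b Ω S :=
  fun x hx => h x (hST hx)

lemma mul {t : ℕ} {a' b' : ℝ} {Ω' : Matrix (Fin t) (Fin s) ℝ} {S : Set (Fin m → ℝ)}
    {T : Set (Fin s → ℝ)} (h' : HasSqNormBoundsOn a' b' Ω' T) (h : HasSqNormBoundsOn a b Ω S)
    (ha' : 0 ≤ a') (hb' : 0 ≤ b') (hST : Set.MapsTo Ω.mulVec S T) :
    HasSqNormBoundsOn (a' * a) (b' * b) (Ω' * Ω) S := by
  intro x hx
  obtain ⟨hlower, hupper⟩ := h x hx
  obtain ⟨hlower', hupper'⟩ := h' _ (hST hx)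
  rw [← Matrix.mulVec_mulVec, mul_assoc, mul_assoc]
  exact ⟨(mul_le_mul_of_nonneg_left hlower ha').trans hlower',
    hupper'.trans (mul_le_mul_of_nonneg_left hupper hb')⟩

lemma gNorm_bounds {n : ℕ} {X : Matrix (Fin m) (Fin n) ℝ}
    (h : HasSqNormBoundsOn a b Ω (Set.range X.col)) :
    √a * gNorm X ≤ gNorm (Ω * X) ∧ gNorm (Ω * X) ≤ √b * gNorm X := by
  have hcol (j : Fin n) : √a * evNorm (X.col j) ≤ evNorm ((Ω * X).col j) ∧
      evNorm ((Ω * X).col j) ≤ √b * evNorm (X.col j) := by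
    obtain ⟨hlower, hupper⟩ := h _ ⟨j, rfl⟩
    rw [sqrt_mul_evNorm, sqrt_mul_evNorm]
    exact ⟨Real.sqrt_le_iff.mpr ⟨evNorm_nonneg _, hlower⟩, Real.le_sqrt_of_sq_le hupper⟩
  constructor
  · simpa only [one_mul] using mul_gNorm_le_mul_gNorm (Real.sqrt_nonneg a) zero_le_one
      fun j => (hcol j).1.trans_eq (one_mul _).symm
  · simpa only [one_mul] using mul_gNorm_le_mul_gNorm zero_le_one (Real.sqrt_nonneg b)
      fun j => (one_mul _).trans_le (hcol j).2

end HasSqNormBoundsOn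

theorem multiSketch_gNorm_bounds_general {s₁ s₂ m n : ℕ} {a₁ b₁ a₂ b₂ : ℝ}
    (ha₂ : 0 ≤ a₂) (hb₂ : 0 ≤ b₂) (X : Matrix (Fin m) (Fin n) ℝ)
    (Ω₁ : Matrix (Fin s₁) (Fin m) ℝ) (Ω₂ : Matrix (Fin s₂) (Fin s₁) ℝ)
    (hΩ₁ : HasSqNormBoundsOn a₁ b₁ Ω₁ (Set.range X.col))
    (hΩ₂ : HasSqNormBoundsOn a₂ b₂ Ω₂ (Set.range (Ω₁ * X).col)) :
    √(a₂ * a₁) * gNorm X ≤ gNorm (Ω₂ * Ω₁ * X) ∧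
      gNorm (Ω₂ * Ω₁ * X) ≤ √(b₂ * b₁) * gNorm X :=
  (hΩ₂.mul hΩ₁ ha₂ hb₂ (mapsTo_mulVec_range_col Ω₁ X)).gNorm_bounds

/-- Multi-sketching, `‖·‖_g` norm: `√(1−ε_s)·‖X‖_g ≤ ‖Ω₂Ω₁X‖_g ≤ √(1+ε_b)·‖X‖_g`. -/
theorem multiSketch_gNorm_bounds {s₁ s₂ m n : ℕ} {ε₁ ε₂ : ℝ}
    (hε₁0 : 0 ≤ ε₁) (hε₁1 : ε₁ < 1) (hε₂0 : 0 ≤ ε₂) (hε₂1 : ε₂ < 1)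
    (X : Matrix (Fin m) (Fin n) ℝ)
    (Ω₁ : Matrix (Fin s₁) (Fin m) ℝ) (Ω₂ : Matrix (Fin s₂) (Fin s₁) ℝ)
    (hΩ₁ : IsSubspaceEmbedding ε₁ Ω₁ (colSpace X))
    (hΩ₂ : IsSubspaceEmbedding ε₂ Ω₂ (colSpace (Ω₁ * X))) :
    Real.sqrt (1 - (ε₁ + ε₂ - ε₁ * ε₂)) * gNorm X ≤ gNorm (Ω₂ * Ω₁ * X) ∧
      gNorm (Ω₂ * Ω₁ * X) ≤
        Real.sqrt (1 + (ε₁ + ε₂ + ε₁ * ε₂)) * gNorm X := by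
  rw [show 1 - (ε₁ + ε₂ - ε₁ * ε₂) = (1 - ε₂) * (1 - ε₁) by ring,
    show 1 + (ε₁ + ε₂ + ε₁ * ε₂) = (1 + ε₂) * (1 + ε₁) by ring]
  exact multiSketch_gNorm_bounds_general (by linarith) (by linarith) X Ω₁ Ω₂
    (hΩ₁.hasSqNormBoundsOn.mono (range_col_subset_colSpace X))
    (hΩ₂.hasSqNormBoundsOn.mono (range_col_subset_colSpace (Ω₁ * X)))
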